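/- arXiv:1705.02708 — 7 statements merged into one kernel-verified Lean document; each statement's English description precedes it below -/
import Mathlib

section
/- Let θ* = 1/(2 − ln(1 − e^{−1})) and, for θ ∈ (0,1) and ν > 0, let f(ν) = ν·e^{−ν}·log₂(e) + ν·e^{−ν}·log₂(1/(1 − e^{−ν})) and g_θ(ν) = (ν·e^{−ν}/ln 2)·(1−θ)/θ. Then for every θ with θ* ≤ θ < 1, the supremum over ν > 0 of min{f(ν), g_θ(ν)} equals (1/(e·ln 2))·(1−θ)/θ. -/
/-!
The supremum is a maximum, attained at `ν = 1`. Since `ν e^{-ν} ≤ e^{-1}` with equality at `ν = 1`,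
the claimed value is the maximum of `g_θ`, hence an upper bound for the minimum. It is attained as
soon as `g_θ(1) ≤ f(1)`, that is `(1-θ)/θ ≤ 1 - ln(1 - e^{-1})`, which is a rearrangement of
`θ* ≤ θ`.
-/

/-- The first minimand of the DD rate upper bound:
`f(ν) = ν e^{-ν} log₂ e + ν e^{-ν} log₂(1/(1 - e^{-ν}))`. -/
noncomputable def fDD (ν : ℝ) : ℝ :=
  ν * Real.exp (-ν) * Real.logb 2 (Real.exp 1) +
    ν * Real.exp (-ν) * Real.logb 2 (1 / (1 - Real.exp (-ν)))

/-- The second minimand of the DD rate upper bound: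
`g_θ(ν) = (ν e^{-ν} / ln 2) (1-θ)/θ`. -/
noncomputable def gDD (θ ν : ℝ) : ℝ :=
  ν * Real.exp (-ν) / Real.log 2 * (1 - θ) / θ

theorem mul_exp_neg_le (ν : ℝ) : ν * Real.exp (-ν) ≤ Real.exp (-1) := by
  have h : ν ≤ Real.exp (ν - 1) := by linarith [Real.add_one_le_exp (ν - 1)]
  calc ν * Real.exp (-ν) ≤ Real.exp (ν - 1) * Real.exp (-ν) := by gcongr
    _ = Real.exp (-1) := by rw [← Real.exp_add]; ring_nf

theorem gDD_one (θ : ℝ) : gDD θ 1 = 1 / (Real.exp 1 * Real.log 2) * (1 - θ) / θ := by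
  unfold gDD
  rw [Real.exp_neg]
  field_simp

theorem fDD_one :
    fDD 1 = Real.exp (-1) / Real.log 2 * (1 - Real.log (1 - Real.exp (-1))) := by
  unfold fDD Real.logb
  rw [Real.log_exp, one_div (1 - _), Real.log_inv]
  ring

/-- For `θ* ≤ θ < 1` with `θ* = 1/(2 - ln(1 - e^{-1}))`, the supremum over `ν > 0` of
`min{f(ν), g_θ(ν)}` equals `(1/(e ln 2)) (1-θ)/θ`. -/
theorem stmt_3 (θ : ℝ) (hθl : 1 / (2 - Real.log (1 - Real.exp (-1))) ≤ θ) (hθ1 : θ < 1) :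
    sSup ((fun ν => min (fDD ν) (gDD θ ν)) '' Set.Ioi (0 : ℝ)) =
      1 / (Real.exp 1 * Real.log 2) * (1 - θ) / θ := by
  have hlog : Real.log (1 - Real.exp (-1)) ≤ 0 := by
    have h1 : Real.exp (-1) < 1 := by simp
    exact Real.log_nonpos (by linarith) (by linarith [Real.exp_pos (-1)])
  have hD : 0 < 2 - Real.log (1 - Real.exp (-1)) := by linarith
  have hθ0 : 0 < θ := lt_of_lt_of_le (one_div_pos.mpr hD) hθl
  have hln : 0 < Real.log 2 := Real.log_pos (by norm_num)
  have hratio : (1 - θ) / θ ≤ 1 - Real.log (1 - Real.exp (-1)) := by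
    rw [div_le_iff₀ hD] at hθl
    rw [div_le_iff₀ hθ0]
    linarith
  have hgf : gDD θ 1 ≤ fDD 1 := by
    rw [fDD_one]
    calc gDD θ 1 = Real.exp (-1) / Real.log 2 * ((1 - θ) / θ) := by unfold gDD; ring
      _ ≤ _ := by gcongr
  rw [← gDD_one]
  refine IsGreatest.csSup_eq ⟨⟨1, Set.mem_Ioi.mpr one_pos, min_eq_right hgf⟩, ?_⟩
  rintro _ ⟨ν, -, rfl⟩
  refine (min_le_right _ _).trans ?_
  have h1θ : 0 ≤ 1 - θ := by linarith
  unfold gDD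
  rw [one_mul]
  gcongr
  exact mul_exp_neg_le ν
end

section
/- Let θ* = 1/(2 − ln(1 − e^{−1})) and, for θ ∈ (0,1) and ν > 0, let f(ν) = ν·e^{−ν}·log₂(e) + ν·e^{−ν}·log₂(1/(1 − e^{−ν})), g_θ(ν) = (ν·e^{−ν}/ln 2)·(1−θ)/θ, and h(x) = −x·log₂ x − (1−x)·log₂(1−x). Then for every θ with 0 < θ < θ*, the supremum over ν > 0 of min{f(ν), g_θ(ν)} is strictly less than the supremum over ν > 0 of min{h(e^{−ν}), g_θ(ν)}. -/
/-- The binary entropy function `h(x) = -x log₂ x - (1-x) log₂ (1-x)`. -/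
noncomputable def binEnt (x : ℝ) : ℝ :=
  -x * Real.logb 2 x - (1 - x) * Real.logb 2 (1 - x)

lemma fDD_eq (ν : ℝ) :
    fDD ν = ν * Real.exp (-ν) * (1 - Real.log (1 - Real.exp (-ν))) / Real.log 2 := by
  unfold fDD Real.logb
  rw [one_div, Real.log_inv, Real.log_exp]
  ring

lemma binEnt_eq (ν : ℝ) :
    binEnt (Real.exp (-ν)) = (ν * Real.exp (-ν)
      - (1 - Real.exp (-ν)) * Real.log (1 - Real.exp (-ν))) / Real.log 2 := by
  unfold binEnt Real.logb
  rw [Real.log_exp]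
  ring

lemma gDD_eq (θ ν : ℝ) :
    gDD θ ν = (1 - θ) / θ * (ν * Real.exp (-ν)) / Real.log 2 := by
  unfold gDD
  ring

lemma one_sub_exp_pos {ν : ℝ} (hν : 0 < ν) : 0 < 1 - Real.exp (-ν) := by
  have : Real.exp (-ν) < 1 := Real.exp_zero ▸ Real.exp_lt_exp.2 (by linarith)
  linarith

lemma log_one_sub_exp_neg {ν : ℝ} (hν : 0 < ν) : Real.log (1 - Real.exp (-ν)) < 0 :=
  Real.log_neg (one_sub_exp_pos hν) (by linarith [Real.exp_pos (-ν)])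

lemma log_two_pos_real : 0 < Real.log 2 := Real.log_pos (by norm_num)

lemma fDD_lt_binEnt {ν : ℝ} (hν : 0 < ν) : fDD ν < binEnt (Real.exp (-ν)) := by
  rw [fDD_eq, binEnt_eq]
  apply div_lt_div_of_pos_right _ log_two_pos_real
  have h1 := log_one_sub_exp_neg hν
  have h2 : Real.exp (-ν) * (1 + ν) < 1 := by
    have h3 : ν + 1 < Real.exp ν := Real.add_one_lt_exp hν.ne'
    have h4 : Real.exp (-ν) * Real.exp ν = 1 := by rw [← Real.exp_add]; simp
    nlinarith [Real.exp_pos (-ν)]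
  nlinarith

lemma fDD_pos {ν : ℝ} (hν : 0 < ν) : 0 < fDD ν := by
  rw [fDD_eq]
  have h1 := log_one_sub_exp_neg hν
  have : 0 < 1 - Real.log (1 - Real.exp (-ν)) := by linarith
  have := log_two_pos_real
  positivity

lemma gDD_pos {θ ν : ℝ} (hc : 0 < (1 - θ) / θ) (hν : 0 < ν) : 0 < gDD θ ν := by
  rw [gDD_eq]
  have := log_two_pos_real
  positivity

lemma continuousOn_fDD : ContinuousOn fDD (Set.Ioi 0) := by
  have h : fDD = fun ν => ν * Real.exp (-ν) * (1 - Real.log (1 - Real.exp (-ν))) / Real.log 2 :=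
    funext fDD_eq
  rw [h]
  have hl : ContinuousOn (fun ν : ℝ => Real.log (1 - Real.exp (-ν))) (Set.Ioi 0) :=
    ContinuousOn.log (by fun_prop) fun ν hν => (one_sub_exp_pos hν).ne'
  fun_prop

lemma continuousOn_binEnt_exp :
    ContinuousOn (fun ν => binEnt (Real.exp (-ν))) (Set.Ioi 0) := by
  simp only [binEnt_eq]
  have hl : ContinuousOn (fun ν : ℝ => Real.log (1 - Real.exp (-ν))) (Set.Ioi 0) :=
    ContinuousOn.log (by fun_prop) fun ν hν => (one_sub_exp_pos hν).ne'
  fun_prop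

lemma continuous_gDD (θ : ℝ) : Continuous (gDD θ) := by
  have h : gDD θ = fun ν => (1 - θ) / θ * (ν * Real.exp (-ν)) / Real.log 2 := funext (gDD_eq θ)
  rw [h]
  fun_prop

lemma gDD_lt_gDD {θ a b : ℝ} (hc : 0 < (1 - θ) / θ) (hab : a < b) (ha : 0 < a) (hb : b < 1) :
    gDD θ a < gDD θ b := by
  rw [gDD_eq, gDD_eq]
  apply div_lt_div_of_pos_right _ log_two_pos_real
  apply mul_lt_mul_of_pos_left _ hc
  -- After dividing by `e^{-a}` this is `a < b e^{a-b}`, which follows from `1 + a - b ≤ e^{a-b}`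
  -- and `b (1 + a - b) - a = (b - a) (1 - b) > 0`.
  have h1 : Real.exp (-b) = Real.exp (-a) * Real.exp (a - b) := by
    rw [← Real.exp_add]; congr 1; ring
  have h2 := Real.add_one_le_exp (a - b)
  have h3 : a < b * Real.exp (a - b) := by
    nlinarith [mul_pos (sub_pos.2 hab) (sub_pos.2 hb),
      mul_le_mul_of_nonneg_left h2 (ha.trans hab).le]
  rw [h1]
  nlinarith [Real.exp_pos (-a)]

/-- Where `g_θ` is the smaller minimand, `c ≤ 1 - ln (1 - e^{-ν})`; the right side decreases in `ν`
and is less than `c` at `ν = 1`. -/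
lemma lt_one_of_gDD_le_fDD {θ ν : ℝ} (hc : 1 - Real.log (1 - Real.exp (-1)) < (1 - θ) / θ)
    (hν : 0 < ν) (h : gDD θ ν ≤ fDD ν) : ν < 1 := by
  rw [gDD_eq, fDD_eq, div_le_div_iff_of_pos_right log_two_pos_real, mul_comm] at h
  have h1 := le_of_mul_le_mul_left h (by positivity)
  by_contra! h2
  have h3 : Real.log (1 - Real.exp (-1)) ≤ Real.log (1 - Real.exp (-ν)) := by
    apply Real.log_le_log (one_sub_exp_pos one_pos)
    have := Real.exp_le_exp.2 (neg_le_neg h2)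
    linarith
  linarith

lemma gDD_le_mul {θ ν : ℝ} (hc : 0 < (1 - θ) / θ) (hν : 0 < ν) :
    gDD θ ν ≤ (1 - θ) / θ / Real.log 2 * ν := by
  have h1 : Real.exp (-ν) ≤ 1 := Real.exp_le_one_iff.2 (by linarith)
  have h2 := mul_le_mul_of_nonneg_left h1 hν.le
  have hk := div_pos hc log_two_pos_real
  have := mul_le_mul_of_nonneg_left h2 hk.le
  rw [gDD_eq, mul_div_right_comm]
  linarith

lemma gDD_le_div {θ ν : ℝ} (hc : 0 < (1 - θ) / θ) (hν : 0 < ν) :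
    gDD θ ν ≤ (1 - θ) / θ / Real.log 2 * (2 / ν) := by
  have h2 : ν * Real.exp (-ν) ≤ 2 / ν := by
    rw [le_div_iff₀ hν]
    have h3 := Real.quadratic_le_exp_of_nonneg hν.le
    have h4 : Real.exp (-ν) * Real.exp ν = 1 := by rw [← Real.exp_add]; simp
    nlinarith [Real.exp_pos (-ν)]
  have hk := div_pos hc log_two_pos_real
  rw [gDD_eq, mul_div_right_comm]
  exact mul_le_mul_of_nonneg_left h2 hk.le

/-- The supremum of `min f g_θ` over `ν > 0` is attained. -/
lemma exists_max {θ : ℝ} (hc : 0 < (1 - θ) / θ) :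
    ∃ ν₀ > 0, ∀ ν > 0, min (fDD ν) (gDD θ ν) ≤ min (fDD ν₀) (gDD θ ν₀) := by
  set k := (1 - θ) / θ / Real.log 2 with hk
  have hkpos : 0 < k := div_pos hc log_two_pos_real
  set m := min (fDD 1) (gDD θ 1) with hm
  have hmpos : 0 < m := lt_min (fDD_pos one_pos) (gDD_pos hc one_pos)
  -- Outside `[a, b]` the bounds `g ≤ kν` and `g ≤ 2k/ν` keep the minimum below its value `m` at `1`.
  set a := min 1 (m / k) with ha
  set b := max 1 (2 * k / m) with hb
  have hapos : 0 < a := lt_min one_pos (div_pos hmpos hkpos)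
  have h1 : (1 : ℝ) ∈ Set.Icc a b := ⟨min_le_left _ _, le_max_left _ _⟩
  have hsub : Set.Icc a b ⊆ Set.Ioi 0 := fun ν hν => hapos.trans_le hν.1
  obtain ⟨ν₀, hν₀, hmax⟩ := isCompact_Icc.exists_isMaxOn ⟨1, h1⟩
    ((continuousOn_fDD.mono hsub).inf (continuous_gDD θ).continuousOn)
  refine ⟨ν₀, hsub hν₀, fun ν hν => ?_⟩
  by_cases hin : ν ∈ Set.Icc a b
  · exact hmax hin
  · have hm₀ : m ≤ min (fDD ν₀) (gDD θ ν₀) := hmax h1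
    refine le_trans ((min_le_right _ _).trans ?_) hm₀
    by_cases hνa : ν < a
    · refine (gDD_le_mul hc hν).trans ?_
      have : ν ≤ m / k := hνa.le.trans (min_le_right _ _)
      rw [le_div_iff₀ hkpos] at this
      linarith
    · have hbν : b < ν := by
        by_contra! h
        exact hin ⟨not_lt.1 hνa, h⟩
      refine (gDD_le_div hc hν).trans ?_
      have : 2 * k / m ≤ ν := (le_max_right _ _).trans hbν.le
      rw [div_le_iff₀ hmpos] at this
      rw [← mul_div_assoc, div_le_iff₀ hν]
      linarith

/-- The value of `min f g` at any point is strictly exceeded by some value of `min h g`: at the same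
point if `f < g` there, and otherwise slightly to its right. -/
lemma exists_lt {θ ν₀ : ℝ} (hc : 0 < (1 - θ) / θ)
    (hc' : 1 - Real.log (1 - Real.exp (-1)) < (1 - θ) / θ) (hν₀ : 0 < ν₀) :
    ∃ ν > 0, min (fDD ν₀) (gDD θ ν₀) < min (binEnt (Real.exp (-ν))) (gDD θ ν) := by
  have hH := fDD_lt_binEnt hν₀
  rcases lt_or_ge (fDD ν₀) (gDD θ ν₀) with h | h
  · exact ⟨ν₀, hν₀, by rw [min_eq_left h.le]; exact lt_min hH h⟩
  · have hlt := lt_one_of_gDD_le_fDD hc' hν₀ h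
    have hcont : ContinuousAt (fun ν => binEnt (Real.exp (-ν))) ν₀ :=
      continuousOn_binEnt_exp.continuousAt (Ioi_mem_nhds hν₀)
    have hev := (hcont.eventually (lt_mem_nhds (h.trans_lt hH))).filter_mono
      (nhdsWithin_le_nhds (s := Set.Ioi ν₀))
    obtain ⟨ν, hν, hν1, hν2⟩ := (hev.and (Ioo_mem_nhdsGT hlt)).exists
    refine ⟨ν, hν₀.trans hν1, ?_⟩
    rw [min_eq_right h]
    exact lt_min hν (gDD_lt_gDD hc hν1 hν₀ hν2)

/-- For `0 < θ < θ*` with `θ* = 1/(2 - ln(1 - e^{-1}))`, the DD rate upper bound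
`sup_{ν>0} min{f(ν), g_θ(ν)}` is strictly smaller than the Bernoulli group testing
capacity `sup_{ν>0} min{h(e^{-ν}), g_θ(ν)}`: DD is strictly suboptimal. -/
theorem stmt_4 (θ : ℝ) (hθ0 : 0 < θ)
    (hθu : θ < 1 / (2 - Real.log (1 - Real.exp (-1)))) :
    sSup ((fun ν => min (fDD ν) (gDD θ ν)) '' Set.Ioi (0 : ℝ)) <
      sSup ((fun ν => min (binEnt (Real.exp (-ν))) (gDD θ ν)) '' Set.Ioi (0 : ℝ)) := by
  have hlog := log_one_sub_exp_neg one_pos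
  have hc' : 1 - Real.log (1 - Real.exp (-1)) < (1 - θ) / θ := by
    -- `θ < 1/(2 - ℓ)` rearranges to `(1 - ℓ) θ < 1 - θ`, where `ℓ = ln (1 - e^{-1})`.
    rw [lt_div_iff₀ (by linarith)] at hθu
    rw [lt_div_iff₀ hθ0]
    linarith
  have hc : 0 < (1 - θ) / θ := by linarith
  obtain ⟨ν₀, hν₀, hmax⟩ := exists_max hc
  obtain ⟨ν₁, hν₁, hlt⟩ := exists_lt hc hc' hν₀
  have hk := div_pos hc log_two_pos_real
  -- A real `sSup` is meaningful only for bounded sets: `g_θ ≤ 2k`, by `kν` for `ν ≤ 1` and by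
  -- `2k/ν` for `ν ≥ 1`, where `k = c / ln 2`.
  have hbdd : BddAbove ((fun ν => min (binEnt (Real.exp (-ν))) (gDD θ ν)) '' Set.Ioi (0 : ℝ)) := by
    refine ⟨(1 - θ) / θ / Real.log 2 * 2, ?_⟩
    rintro _ ⟨ν, hν, rfl⟩
    refine (min_le_right _ _).trans ?_
    rcases le_total ν 1 with h | h
    · exact (gDD_le_mul hc hν).trans (mul_le_mul_of_nonneg_left (by linarith) hk.le)
    · exact (gDD_le_div hc hν).trans
        (mul_le_mul_of_nonneg_left (div_le_self (by norm_num) h) hk.le)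
  calc sSup ((fun ν => min (fDD ν) (gDD θ ν)) '' Set.Ioi (0 : ℝ))
      ≤ min (fDD ν₀) (gDD θ ν₀) := by
        refine csSup_le ⟨_, ⟨1, Set.mem_Ioi.2 one_pos, rfl⟩⟩ ?_
        rintro _ ⟨ν, hν, rfl⟩
        exact hmax ν hν
    _ < min (binEnt (Real.exp (-ν₁))) (gDD θ ν₁) := hlt
    _ ≤ _ := le_csSup hbdd ⟨ν₁, hν₁, rfl⟩
end

section
/- For every θ with 0 < θ ≤ 1/3, the supremum over ν > 0 of min{h(e^{−ν}), (ν·e^{−ν}/ln 2)·(1−θ)/θ} equals 1, where h(x) = −x·log₂ x − (1−x)·log₂(1−x) is the binary entropy function. -/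
lemma binEnt_eq_s6 (x : ℝ) : binEnt x = Real.binEntropy x / Real.log 2 := by
  simp only [binEnt, Real.logb, Real.binEntropy, Real.log_inv]
  ring

lemma binEnt_le_one (x : ℝ) : binEnt x ≤ 1 := by
  rw [binEnt_eq_s6, div_le_one (Real.log_pos one_lt_two)]
  exact Real.binEntropy_le_log_two

/-- For `0 < θ ≤ 1/3`, the capacity of Bernoulli nonadaptive group testing
`sup_{ν>0} min{h(e^{-ν}), (ν e^{-ν} / ln 2) (1-θ)/θ}` equals `1`. -/
theorem stmt_6 (θ : ℝ) (hθ0 : 0 < θ) (hθ : θ ≤ 1 / 3) :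
    sSup ((fun ν => min (binEnt (Real.exp (-ν)))
      (ν * Real.exp (-ν) / Real.log 2 * (1 - θ) / θ)) '' Set.Ioi (0 : ℝ)) = 1 := by
  have hlog : 0 < Real.log 2 := Real.log_pos one_lt_two
  refine IsGreatest.csSup_eq ⟨⟨Real.log 2, hlog, ?_⟩, ?_⟩
  · have hexp : Real.exp (-Real.log 2) = 2⁻¹ := by
      rw [Real.exp_neg, Real.exp_log two_pos]
    have hent : binEnt 2⁻¹ = 1 := by
      rw [binEnt_eq_s6, Real.binEntropy_two_inv, div_self hlog.ne']
    simp only [hexp, hent]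
    rw [min_eq_left_iff, mul_div_cancel_left₀ _ hlog.ne', le_div_iff₀ hθ0]
    linarith
  · rintro _ ⟨ν, -, rfl⟩
    exact (min_le_left _ _).trans (binEnt_le_one _)
end

section
/- For every θ with 0.359 ≤ θ < 1, the supremum over ν > 0 of min{h(e^{−ν}), (ν·e^{−ν}/ln 2)·(1−θ)/θ} equals (1/(e·ln 2))·(1−θ)/θ, where h(x) = −x·log₂ x − (1−x)·log₂(1−x) is the binary entropy function. -/
lemma log_exp_one_sub_one_le : Real.log (Real.exp 1 - 1) ≤ 0.5425 := by
  have h1 := Real.exp_one_gt_d9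
  have h2 := Real.exp_one_lt_d9
  rw [Real.log_le_iff_le_exp (by linarith)]
  have h := Real.sum_le_exp_of_nonneg (x := 0.5425) (by norm_num) 5
  norm_num [Finset.sum_range_succ, Nat.factorial] at h
  norm_num
  linarith

lemma binEnt_exp_neg_one : binEnt (Real.exp (-1)) =
    (1 + (Real.exp 1 - 1) * (1 - Real.log (Real.exp 1 - 1))) / (Real.exp 1 * Real.log 2) := by
  have h1 := Real.exp_one_gt_d9
  have hl : Real.log 2 ≠ 0 := (Real.log_pos (by norm_num)).ne'
  have hp : 1 - Real.exp (-1) = (Real.exp 1 - 1) / Real.exp 1 := by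
    rw [Real.exp_neg]; field_simp
  have hq : Real.log (1 - Real.exp (-1)) = Real.log (Real.exp 1 - 1) - 1 := by
    rw [hp, Real.log_div (by linarith) (Real.exp_pos 1).ne', Real.log_exp]
  unfold binEnt Real.logb
  rw [hq, Real.log_exp, hp, Real.exp_neg]
  field_simp
  ring

/-- For `0.359 ≤ θ < 1`, the capacity of Bernoulli nonadaptive group testing
`sup_{ν>0} min{h(e^{-ν}), (ν e^{-ν} / ln 2) (1-θ)/θ}` equals `(1/(e ln 2)) (1-θ)/θ`. -/
theorem stmt_7 (θ : ℝ) (hθ0 : 0.359 ≤ θ) (hθ1 : θ < 1) :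
    sSup ((fun ν => min (binEnt (Real.exp (-ν)))
      (ν * Real.exp (-ν) / Real.log 2 * (1 - θ) / θ)) '' Set.Ioi (0 : ℝ)) =
      1 / (Real.exp 1 * Real.log 2) * (1 - θ) / θ := by
  norm_num at hθ0
  have hθ : 0 < θ := by linarith
  have hl : 0 < Real.log 2 := Real.log_pos (by norm_num)
  refine IsGreatest.csSup_eq ⟨⟨1, Set.mem_Ioi.2 one_pos, ?_⟩, ?_⟩
  · have hval : 1 * Real.exp (-1) / Real.log 2 * (1 - θ) / θ =
        1 / (Real.exp 1 * Real.log 2) * (1 - θ) / θ := by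
      rw [Real.exp_neg]; field_simp
    simp only
    rw [hval]
    refine min_eq_right ?_
    have hr : (1 - θ) / θ ≤ 641 / 359 := by
      rw [div_le_iff₀ hθ]; linarith
    have hnum : 641 / 359 ≤ 1 + (Real.exp 1 - 1) * (1 - Real.log (Real.exp 1 - 1)) := by
      have h1 := Real.exp_one_gt_d9
      have hL := log_exp_one_sub_one_le
      norm_num at h1 hL
      have : (1.718 : ℝ) * 0.4575 ≤ (Real.exp 1 - 1) * (1 - Real.log (Real.exp 1 - 1)) := by
        apply mul_le_mul <;> norm_num <;> linarith
      norm_num at this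
      linarith
    rw [binEnt_exp_neg_one, mul_div_assoc, one_div_mul_eq_div]
    gcongr
    exact hr.trans hnum
  · rintro _ ⟨ν, -, rfl⟩
    refine (min_le_right _ _).trans ?_
    have hν : ν * Real.exp (-ν) ≤ 1 / Real.exp 1 := by
      -- This is `ν ≤ e^{ν-1}` multiplied by `e^{-ν}`.
      have h := Real.add_one_le_exp (ν - 1)
      calc ν * Real.exp (-ν) ≤ Real.exp (ν - 1) * Real.exp (-ν) := by
            gcongr; linarith
        _ = 1 / Real.exp 1 := by
            rw [← Real.exp_add, one_div, ← Real.exp_neg]; congr 1; ring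
    have h1θ : 0 ≤ 1 - θ := by linarith
    rw [← div_div 1 (Real.exp 1) (Real.log 2)]
    gcongr
end

section
/- In the group testing setup, if the DD set is itself a satisfying set, then it is the unique smallest satisfying set: for every satisfying set L one has |DD| ≤ |L|, and if |L| = |DD| then L = DD. -/
open scoped Classical

/-! Group testing setup: `n` items indexed by `Fin n` and `T` tests indexed by `Fin T`;
test `t` has pool `X t ⊆ Fin n`; the defective set is `K ⊆ Fin n`; test `t` is positive
if `X t ∩ K ≠ ∅` and negative otherwise. -/

/-- Test `t` is positive: its pool contains a defective item. -/
def IsPositive {n T : ℕ} (X : Fin T → Finset (Fin n)) (K : Finset (Fin n))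
    (t : Fin T) : Prop :=
  (X t ∩ K).Nonempty

/-- A set `L` is satisfying if no negative test contains any item of `L` and every
positive test contains at least one item of `L`. -/
def Satisfying {n T : ℕ} (X : Fin T → Finset (Fin n)) (K L : Finset (Fin n)) : Prop :=
  (∀ t, ¬ IsPositive X K t → ∀ i ∈ L, i ∉ X t) ∧
    (∀ t, IsPositive X K t → (X t ∩ L).Nonempty)

/-- The set of possible defectives: items `i` such that every test whose pool
contains `i` is positive. -/
noncomputable def PD {n T : ℕ} (X : Fin T → Finset (Fin n)) (K : Finset (Fin n)) : Finset (Fin n) :=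
  Finset.univ.filter fun i => ∀ t, i ∈ X t → IsPositive X K t

/-- The DD set: items `i ∈ PD` such that some test `t` has `i ∈ X t` and
`X t ∩ PD = {i}`. -/
noncomputable def DD {n T : ℕ} (X : Fin T → Finset (Fin n)) (K : Finset (Fin n)) : Finset (Fin n) :=
  (PD X K).filter fun i => ∃ t, i ∈ X t ∧ X t ∩ PD X K = {i}

/-! Every satisfying set `L` contains `DD`: since `L` avoids the negative tests, `L ⊆ PD`, so a
positive test whose only possible defective is `i` can be satisfied by `L` only through `i`.
Both claims then follow from `DD ⊆ L` by comparing cardinalities. -/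

theorem Satisfying.subset_PD {n T : ℕ} {X : Fin T → Finset (Fin n)} {K L : Finset (Fin n)}
    (hL : Satisfying X K L) : L ⊆ PD X K := by
  intro i hi
  refine Finset.mem_filter.2 ⟨Finset.mem_univ i, fun t hit => ?_⟩
  by_contra hneg
  exact hL.1 t hneg i hi hit

theorem Satisfying.DD_subset {n T : ℕ} {X : Fin T → Finset (Fin n)} {K L : Finset (Fin n)}
    (hL : Satisfying X K L) : DD X K ⊆ L := by
  intro i hi
  obtain ⟨hiPD, t, hit, ht⟩ := Finset.mem_filter.1 hi
  have hpos : IsPositive X K t := (Finset.mem_filter.1 hiPD).2 t hit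
  obtain ⟨j, hj⟩ := hL.2 t hpos
  obtain ⟨hjt, hjL⟩ := Finset.mem_inter.1 hj
  have hji : j ∈ X t ∩ PD X K := Finset.mem_inter.2 ⟨hjt, hL.subset_PD hjL⟩
  rw [ht, Finset.mem_singleton] at hji
  exact hji ▸ hjL

/-- If the DD set is itself a satisfying set, then it is the unique smallest satisfying
set: every satisfying set `L` has `|DD| ≤ |L|`, with equality only if `L = DD`. -/
theorem stmt_11 {n T : ℕ} (X : Fin T → Finset (Fin n)) (K : Finset (Fin n))
    (hDD : Satisfying X K (DD X K)) (L : Finset (Fin n)) (hL : Satisfying X K L) :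
    (DD X K).card ≤ L.card ∧ (L.card = (DD X K).card → L = DD X K) := by
  exact ⟨Finset.card_le_card hL.DD_subset,
    fun h => (Finset.eq_of_subset_of_card_le hL.DD_subset h.le).symm⟩
end

section
/- In the group testing setup, if z is a feasible vector for the LP relaxation and t is a positive test whose pool contains exactly one possible defective i (i.e., X_t ∩ PD = {i}), then z_i ≥ 1. In particular, z_i ≥ 1 for every item i in the DD set. -/
/-! An item outside `PD` lies in the pool of some negative test, whose sum of nonnegative
coordinates vanishes, so its own coordinate is zero. Hence the sum of `z` over a pool is the sum
over the possible defectives in that pool; for a positive test with `X t ∩ PD = {i}` this sum is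
`z i`, and feasibility makes it at least `1`. A test witnessing `i ∈ DD` contains `i ∈ PD`, so it
is positive. -/

open scoped Classical

/-- A vector `z ∈ ℝ^n` is feasible for the LP relaxation if `z i ≥ 0` for all `i`,
`∑_{i ∈ X t} z i ≥ 1` for every positive test `t`, and `∑_{i ∈ X t} z i = 0` for
every negative test `t`. -/
def LPFeasible {n T : ℕ} (X : Fin T → Finset (Fin n)) (K : Finset (Fin n))
    (z : Fin n → ℝ) : Prop :=
  (∀ i, 0 ≤ z i) ∧
    (∀ t, IsPositive X K t → 1 ≤ ∑ i ∈ X t, z i) ∧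
    (∀ t, ¬ IsPositive X K t → ∑ i ∈ X t, z i = 0)

/-- If `z` is feasible for the LP relaxation and `t` is a positive test whose pool
contains exactly one possible defective `i`, then `z i ≥ 1`. In particular `z i ≥ 1`
for every item `i` in the DD set. -/
theorem stmt_14 {n T : ℕ} (X : Fin T → Finset (Fin n)) (K : Finset (Fin n))
    (z : Fin n → ℝ) (hz : LPFeasible X K z) :
    (∀ t, IsPositive X K t → ∀ i, X t ∩ PD X K = {i} → 1 ≤ z i) ∧
      (∀ i ∈ DD X K, 1 ≤ z i) := by
  have hzero : ∀ j, j ∉ PD X K → z j = 0 := by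
    intro j hj
    simp only [PD, Finset.mem_filter, Finset.mem_univ, true_and] at hj
    push Not at hj
    obtain ⟨t, hjt, hneg⟩ := hj
    exact (Finset.sum_eq_zero_iff_of_nonneg fun k _ => hz.1 k).1 (hz.2.2 t hneg) j hjt
  have hone : ∀ t, IsPositive X K t → ∀ i, X t ∩ PD X K = {i} → 1 ≤ z i := by
    intro t ht i hi
    have hsum : ∑ j ∈ X t ∩ PD X K, z j = ∑ j ∈ X t, z j :=
      Finset.sum_subset Finset.inter_subset_left fun j hj hj' =>
        hzero j fun hPD => hj' (Finset.mem_inter.2 ⟨hj, hPD⟩)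
    rw [hi, Finset.sum_singleton] at hsum
    exact hsum ▸ hz.2.1 t ht
  refine ⟨hone, fun i hi => ?_⟩
  obtain ⟨hPD, t, hit, ht⟩ := Finset.mem_filter.1 hi
  exact hone t ((Finset.mem_filter.1 hPD).2 t hit) i ht
end

section
/- In the group testing setup, suppose the DD set is a satisfying set, and let z* be its indicator vector (z*_i = 1 if i ∈ DD and z*_i = 0 otherwise). Then z* is feasible for the LP relaxation, every feasible vector z satisfies Σ_i z_i ≥ |DD| = Σ_i z*_i, and equality Σ_i z_i = |DD| holds only if z = z*. Hence z* is the unique optimal solution of the LP relaxation. -/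
open scoped Classical

/-! Every `i ∈ DD` has a positive test in whose pool it is the only possible defective.
A feasible `z` vanishes outside `PD`, because an item outside `PD` lies in a negative test, on
which the nonnegative entries of `z` sum to zero. The witnessing test therefore forces `1 ≤ z i`
on `DD`, so `∑ i, z i ≥ |DD|`. Thus `z` dominates the indicator of `DD` coordinatewise, and if
the sums agree then the two vectors agree. Feasibility of the indicator is the assumption that
`DD` is satisfying. -/

theorem LPFeasible.eq_zero_of_notMem_PD {n T : ℕ} {X : Fin T → Finset (Fin n)}
    {K : Finset (Fin n)} {z : Fin n → ℝ} (hz : LPFeasible X K z) {i : Fin n}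
    (hi : i ∉ PD X K) : z i = 0 := by
  simp only [PD, Finset.mem_filter, Finset.mem_univ, true_and, not_forall] at hi
  obtain ⟨t, hit, ht⟩ := hi
  exact (Finset.sum_eq_zero_iff_of_nonneg fun j _ => hz.1 j).1 (hz.2.2 t ht) i hit

theorem LPFeasible.one_le_of_mem_DD {n T : ℕ} {X : Fin T → Finset (Fin n)}
    {K : Finset (Fin n)} {z : Fin n → ℝ} (hz : LPFeasible X K z) {i : Fin n}
    (hi : i ∈ DD X K) : 1 ≤ z i := by
  obtain ⟨hPD, t, hit, ht⟩ := Finset.mem_filter.1 hi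
  have hpos : IsPositive X K t := (Finset.mem_filter.1 hPD).2 t hit
  have hsum : ∑ j ∈ X t, z j = z i := by
    refine Finset.sum_eq_single_of_mem i hit fun j hj hji => hz.eq_zero_of_notMem_PD fun hjPD => ?_
    have hmem : j ∈ X t ∩ PD X K := Finset.mem_inter.2 ⟨hj, hjPD⟩
    rw [ht] at hmem
    exact hji (Finset.mem_singleton.1 hmem)
  exact hsum ▸ hz.2.1 t hpos

/-- If the DD set is a satisfying set, then its indicator vector `z*` is feasible for
the LP relaxation, every feasible vector `z` satisfies `∑ i, z i ≥ |DD| = ∑ i, z* i`,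
and equality holds only if `z = z*`: `z*` is the unique optimal LP solution. -/
theorem stmt_15 {n T : ℕ} (X : Fin T → Finset (Fin n)) (K : Finset (Fin n))
    (hDD : Satisfying X K (DD X K))
    (zstar : Fin n → ℝ) (hzstar : zstar = fun i => if i ∈ DD X K then 1 else 0) :
    LPFeasible X K zstar ∧
      (∑ i, zstar i = (DD X K).card) ∧
      (∀ z, LPFeasible X K z →
        ((DD X K).card : ℝ) ≤ ∑ i, z i ∧ (∑ i, z i = (DD X K).card → z = zstar)) := by
  have hnn : ∀ i, 0 ≤ zstar i := fun i => by
    rw [hzstar]; dsimp only; split_ifs <;> norm_num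
  have hcard : ∑ i, zstar i = (DD X K).card := by simp [hzstar]
  refine ⟨⟨hnn, fun t ht => ?_, fun t ht => ?_⟩, hcard, fun z hz => ?_⟩
  · obtain ⟨i, hi⟩ := hDD.2 t ht
    obtain ⟨hit, hiD⟩ := Finset.mem_inter.1 hi
    calc (1 : ℝ) = zstar i := by simp [hzstar, hiD]
      _ ≤ ∑ j ∈ X t, zstar j := Finset.single_le_sum (fun j _ => hnn j) hit
  · refine Finset.sum_eq_zero fun i hi => ?_
    have hiD : i ∉ DD X K := fun h => hDD.1 t ht i h hi
    simp [hzstar, hiD]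
  · have hle : ∀ i ∈ Finset.univ, zstar i ≤ z i := fun i _ => by
      rw [hzstar]; dsimp only; split_ifs with h
      · exact hz.one_le_of_mem_DD h
      · exact hz.1 i
    refine ⟨hcard ▸ Finset.sum_le_sum hle, fun heq => funext fun i => ?_⟩
    exact ((Finset.sum_eq_sum_iff_of_le hle).1 (hcard.trans heq.symm) i (Finset.mem_univ i)).symm
end
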